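/- arXiv:1308.2096 — 2 statements merged into one kernel-verified Lean document; each statement's English description precedes it below -/
import Mathlib

section
/- Let T be a finite tree of order n ≥ 3 with s support vertices. Then γ_{-1}^d(T) ≤ (n+s)/2. -/
/-!
Let `P` be the set of support vertices. Every vertex outside `P` receives one of two colors, and for
each color `b` the set `S_b` consists of `P` together with the vertices of color `b`. Then
`|S_true| + |S_false| = n + s`, so the smaller of the two sets has at most `(n + s) / 2` elements;
it remains to choose the coloring so that both sets are global defensive `(-1)`-alliances.

This follows from a condition at each vertex `v`, called `GoodAt` below. If `v` is a support vertex, each color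
occurs on at most `⌈deg v / 2⌉` of its neighbors outside `P`. If `v` is not a support vertex, at most
`⌈deg v / 2⌉` neighbors outside `P` have the color opposite to `v`, and some neighbor is either in
`P` or has the opposite color. The condition can be met at `v` even when `v` and one of its neighbors
are already colored (`exists_recolor_goodAt`): at a support vertex the remaining neighbors are
colored as evenly as possible (`exists_balanced_extension`), and at any other vertex it is enough to
have at most one neighbor of the opposite color, and exactly one if no neighbor lies in `P` (the
neighbor of a leaf always does). Rooting the tree, every vertex has only one neighbor
that is not its child, so the tree can be colored level by level (`exists_goodAt_of_dist_lt`).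
-/

open Finset

variable {V : Type*}

/-- `degIn G S v` is the number of neighbors that `v` has in `S` (denoted `δ_S(v)`). -/
def degIn [Fintype V] [DecidableEq V] (G : SimpleGraph V) [DecidableRel G.Adj]
    (S : Finset V) (v : V) : ℕ :=
  (G.neighborFinset v ∩ S).card

/-- A nonempty set `S` is a defensive `k`-alliance in `G` if every vertex of `S` has at least
`k` more neighbors inside `S` than outside. -/
def IsDefensiveKAlliance [Fintype V] [DecidableEq V] (G : SimpleGraph V) [DecidableRel G.Adj]
    (k : ℤ) (S : Finset V) : Prop :=
  S.Nonempty ∧ ∀ v ∈ S, (degIn G Sᶜ v : ℤ) + k ≤ (degIn G S v : ℤ)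

/-- The defensive `k`-alliance number: minimum cardinality of a defensive `k`-alliance. -/
noncomputable def defensiveAllianceNum [Fintype V] [DecidableEq V] (G : SimpleGraph V)
    [DecidableRel G.Adj] (k : ℤ) : ℕ :=
  sInf {m : ℕ | ∃ S : Finset V, IsDefensiveKAlliance G k S ∧ S.card = m}

/-- `S` is a dominating set: every vertex outside `S` has a neighbor in `S`. -/
def IsDominatingSet (G : SimpleGraph V) (S : Finset V) : Prop :=
  ∀ v, v ∉ S → ∃ u ∈ S, G.Adj u v

/-- A global defensive `k`-alliance is a defensive `k`-alliance which is also dominating. -/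
def IsGlobalDefensiveKAlliance [Fintype V] [DecidableEq V] (G : SimpleGraph V)
    [DecidableRel G.Adj] (k : ℤ) (S : Finset V) : Prop :=
  IsDefensiveKAlliance G k S ∧ IsDominatingSet G S

/-- The global defensive `k`-alliance number `γ_k^d(G)`. -/
noncomputable def globalDefensiveAllianceNum [Fintype V] [DecidableEq V] (G : SimpleGraph V)
    [DecidableRel G.Adj] (k : ℤ) : ℕ :=
  sInf {m : ℕ | ∃ S : Finset V, IsGlobalDefensiveKAlliance G k S ∧ S.card = m}

/-- The condition at `v` on a two-coloring `c` which, imposed at every vertex, makes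
`{w | P w ∨ c w = b}` a global defensive `(-1)`-alliance for both colors `b`. The colors of the vertices satisfying `P` are irrelevant for
the resulting sets. -/
def GoodAt [Fintype V] (G : SimpleGraph V) [DecidableRel G.Adj] (P : V → Prop) [DecidablePred P]
    (c : V → Bool) (v : V) : Prop :=
  (P v → ∀ b, 2 * #{w ∈ G.neighborFinset v | ¬ P w ∧ c w = b} ≤ G.degree v + 1) ∧
  (¬ P v → 2 * #{w ∈ G.neighborFinset v | ¬ P w ∧ c w ≠ c v} ≤ G.degree v + 1 ∧
    ∃ w ∈ G.neighborFinset v, P w ∨ c w ≠ c v)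

/-- A coloring that is balanced on `A` can be changed on `B` so that it is balanced on `A ∪ B`. -/
lemma exists_balanced_extension [DecidableEq V] (A B : Finset V) (hAB : Disjoint A B)
    (c : V → Bool) (hA : ∀ b, 2 * #{w ∈ A | c w = b} ≤ #A + 1) :
    ∃ c' : V → Bool, (∀ w ∉ B, c' w = c w) ∧ ∀ b, 2 * #{w ∈ A ∪ B | c' w = b} ≤ #(A ∪ B) + 1 := by
  induction B using Finset.induction_on with
  | empty => exact ⟨c, fun _ _ => rfl, by simpa using hA⟩
  | insert x B hx ih =>
    obtain ⟨hxA, hAB'⟩ := Finset.disjoint_insert_right.mp hAB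
    obtain ⟨c', h1, h2⟩ := ih hAB'
    have hxU : x ∉ A ∪ B := by simp [hxA, hx]
    have htot : #{w ∈ A ∪ B | c' w = true} + #{w ∈ A ∪ B | c' w = false} = #(A ∪ B) := by
      rw [← Finset.card_filter_add_card_filter_not (s := A ∪ B) (fun w => c' w = true)]
      simp
    -- the new vertex gets a color which is not in the majority so far
    obtain ⟨b₀, hb₀⟩ : ∃ b₀, 2 * #{w ∈ A ∪ B | c' w = b₀} ≤ #(A ∪ B) := by
      rcases le_total (#{w ∈ A ∪ B | c' w = true}) (#{w ∈ A ∪ B | c' w = false}) with h | h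
      · exact ⟨true, by omega⟩
      · exact ⟨false, by omega⟩
    refine ⟨Function.update c' x b₀, ?_, ?_⟩
    · intro w hw
      simp only [Finset.mem_insert, not_or] at hw
      rw [Function.update_of_ne hw.1, h1 w hw.2]
    · intro b
      have hcongr : {w ∈ A ∪ B | Function.update c' x b₀ w = b} = {w ∈ A ∪ B | c' w = b} := by
        apply Finset.filter_congr
        intro w hw
        rw [Function.update_of_ne (by rintro rfl; exact hxU hw)]
      rw [Finset.union_insert, Finset.card_insert_of_notMem hxU, Finset.filter_insert, hcongr,
        Function.update_self]
      split_ifs with h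
      · subst h
        have := Finset.card_insert_le x {w ∈ A ∪ B | c' w = b₀}
        omega
      · have := h2 b
        omega

/-- If at most one neighbor of `v` lies outside the set `F` of neighbors, some recoloring of
`F` is good at `v`. The hypothesis `hleaf` excludes a vertex whose only neighbor does not satisfy
`P`: the color of that neighbor could be prescribed to be the color of `v`. -/
lemma exists_recolor_goodAt [Fintype V] [DecidableEq V] (G : SimpleGraph V) [DecidableRel G.Adj]
    (P : V → Prop) [DecidablePred P] (v : V) (hpos : 1 ≤ G.degree v)
    (hleaf : (∃ w ∈ G.neighborFinset v, P w) ∨ 2 ≤ G.degree v)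
    (F : Finset V) (hF : F ⊆ G.neighborFinset v) (hcard : #(G.neighborFinset v \ F) ≤ 1)
    (c : V → Bool) :
    ∃ c' : V → Bool, (∀ w ∉ F, c' w = c w) ∧ GoodAt G P c' v := by
  have hvF : v ∉ F := fun h => by simpa using hF h
  by_cases hv : P v
  · set M := {w ∈ G.neighborFinset v | ¬ P w} with hM
    have hMF : #(M \ F) ≤ 1 :=
      (Finset.card_le_card (Finset.sdiff_subset_sdiff (Finset.filter_subset _ _) le_rfl)).trans
        hcard
    obtain ⟨c', h1, h2⟩ := exists_balanced_extension (M \ F) (M ∩ F)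
      (Finset.disjoint_sdiff_inter M F) c (fun b => by
        have := Finset.card_filter_le (M \ F) (fun w => c w = b)
        omega)
    refine ⟨c', fun w hw => h1 w (by simp [hw]), fun _ b => ?_, fun h => absurd hv h⟩
    have h3 := h2 b
    rw [Finset.sdiff_union_inter, hM, Finset.filter_filter] at h3
    have h4 : #{w ∈ G.neighborFinset v | ¬ P w} ≤ G.degree v := by
      rw [← G.card_neighborFinset_eq_degree]
      exact Finset.card_filter_le _ _
    omega
  · -- one opposite neighbor respects the bound, as the degree is positive; none is needed when
    -- some neighbor satisfies `P`
    suffices h : ∃ c' : V → Bool, (∀ w ∉ F, c' w = c w) ∧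
        #{w ∈ G.neighborFinset v | c' w ≠ c v} ≤ 1 ∧
        ∃ w ∈ G.neighborFinset v, P w ∨ c' w ≠ c v by
      obtain ⟨c', h1, h2, h3⟩ := h
      have hcv := h1 v hvF
      refine ⟨c', h1, fun h => absurd h hv, fun _ => ?_⟩
      rw [hcv]
      refine ⟨?_, h3⟩
      have : #{w ∈ G.neighborFinset v | ¬ P w ∧ c' w ≠ c v} ≤
          #{w ∈ G.neighborFinset v | c' w ≠ c v} :=
        Finset.card_le_card fun w => by simp only [Finset.mem_filter]; tauto
      omega
    by_cases hd : ∃ w ∈ G.neighborFinset v, P w ∨ (w ∉ F ∧ c w ≠ c v)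
    · refine ⟨fun w => if w ∈ F then c v else c w, fun w hw => by simp [hw], ?_, ?_⟩
      · refine (Finset.card_le_card ?_).trans hcard
        intro w
        simp only [Finset.mem_filter, Finset.mem_sdiff]
        grind
      · obtain ⟨w, hw, h⟩ := hd
        refine ⟨w, hw, h.imp id ?_⟩
        rintro ⟨h1, h2⟩
        simpa [h1] using h2
    · push Not at hd
      have h2 : 2 ≤ G.degree v := hleaf.resolve_left fun ⟨w, hw, h⟩ => (hd w hw).1 h
      obtain ⟨x, hx⟩ : F.Nonempty := by
        rw [Finset.nonempty_iff_ne_empty]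
        rintro rfl
        rw [Finset.sdiff_empty, G.card_neighborFinset_eq_degree] at hcard
        omega
      refine ⟨fun w => if w ∈ F then (if w = x then !c v else c v) else c w,
        fun w hw => by simp [hw], ?_, x, hF hx, Or.inr (by simp [hx])⟩
      rw [Finset.card_le_one]
      intro a ha b hb
      simp only [Finset.mem_filter] at ha hb
      have := (hd a ha.1).2
      have := (hd b hb.1).2
      grind

/-- In a rooted tree the parent of a vertex is unique. -/
lemma SimpleGraph.IsTree.eq_of_adj_of_dist_lt {G : SimpleGraph V} (hT : G.IsTree) (r : V)
    {u u' w : V} (h : G.Adj u w) (h' : G.Adj u' w) (hd : G.dist r w = G.dist r u + 1)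
    (hd' : G.dist r w = G.dist r u' + 1) : u = u' := by
  obtain ⟨p, hp⟩ := hT.connected.exists_walk_length_eq_dist r u
  obtain ⟨q, hq⟩ := hT.connected.exists_walk_length_eq_dist r u'
  have hp' : (p.concat h).IsPath := (p.concat h).isPath_of_length_eq_dist (by simp [hp, hd])
  have hq' : (q.concat h').IsPath := (q.concat h').isPath_of_length_eq_dist (by simp [hq, hd'])
  have := congrArg SimpleGraph.Walk.penultimate ((hT.existsUnique_path r w).unique hp' hq')
  simpa using this

lemma GoodAt.congr [Fintype V] {G : SimpleGraph V} [DecidableRel G.Adj] {P : V → Prop}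
    [DecidablePred P] {c c' : V → Bool} {v : V} (hv : c' v = c v)
    (hN : ∀ w, G.Adj v w → c' w = c w) (h : GoodAt G P c v) : GoodAt G P c' v := by
  have hf : ∀ b, {w ∈ G.neighborFinset v | ¬ P w ∧ c' w = b} =
      {w ∈ G.neighborFinset v | ¬ P w ∧ c w = b} := fun b =>
    Finset.filter_congr fun w hw => by rw [hN w (by simpa using hw)]
  have hf' : {w ∈ G.neighborFinset v | ¬ P w ∧ c' w ≠ c' v} =
      {w ∈ G.neighborFinset v | ¬ P w ∧ c w ≠ c v} :=
    Finset.filter_congr fun w hw => by rw [hN w (by simpa using hw), hv]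
  refine ⟨fun hP b => hf b ▸ h.1 hP b, fun hP => ⟨hf' ▸ (h.2 hP).1, ?_⟩⟩
  obtain ⟨w, hw, hw'⟩ := (h.2 hP).2
  refine ⟨w, hw, ?_⟩
  rwa [hN w (by simpa using hw), hv]

/-- Level-by-level coloring of the tree rooted at `r`. Being good at the vertices of level `n` is
arranged by recoloring only level `n + 1`, where the sets of children of distinct vertices are
disjoint, so these recolorings are carried out simultaneously. -/
lemma exists_goodAt_of_dist_lt [Fintype V] [DecidableEq V] {G : SimpleGraph V} [DecidableRel G.Adj]
    (hT : G.IsTree) (P : V → Prop) [DecidablePred P] (hpos : ∀ v, 1 ≤ G.degree v)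
    (hleaf : ∀ v, (∃ w ∈ G.neighborFinset v, P w) ∨ 2 ≤ G.degree v) (r : V) (n : ℕ) :
    ∃ c : V → Bool, ∀ v, G.dist r v < n → GoodAt G P c v := by
  induction n with
  | zero => exact ⟨fun _ => true, by simp⟩
  | succ n ih =>
    obtain ⟨c, hc⟩ := ih
    have hstep : ∀ v, G.dist r v = n → ∃ c' : V → Bool,
        (∀ w, w ∉ (G.neighborFinset v).filter (fun w => G.dist r w = n + 1) → c' w = c w) ∧
        GoodAt G P c' v := by
      intro v hv
      apply exists_recolor_goodAt G P v (hpos v) (hleaf v) _ (Finset.filter_subset _ _)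
      -- the only neighbor which is not a child is the parent
      rw [Finset.card_le_one]
      intro a ha b hb
      simp only [Finset.mem_sdiff, Finset.mem_filter, SimpleGraph.mem_neighborFinset, not_and]
        at ha hb
      have h1 := hT.dist_eq_dist_add_one_of_adj r ha.1
      have h2 := hT.dist_eq_dist_add_one_of_adj r hb.1
      have := ha.2 ha.1
      have := hb.2 hb.1
      exact hT.eq_of_adj_of_dist_lt r ha.1.symm hb.1.symm (by omega) (by omega)
    choose! f hf1 hf2 using hstep
    have hpar : ∀ w, G.dist r w = n + 1 → ∃ u, G.Adj u w ∧ G.dist r u = n := by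
      intro w hw
      obtain ⟨p, hp⟩ := hT.connected.exists_walk_length_eq_dist w r
      rw [SimpleGraph.dist_comm, hw] at hp
      cases p with
      | nil => simp at hp
      | @cons _ u _ h p =>
        refine ⟨u, h.symm, ?_⟩
        have h1 := hT.dist_eq_dist_add_one_of_adj r h
        have h2 := SimpleGraph.dist_le p
        rw [SimpleGraph.dist_comm] at h2
        simp only [SimpleGraph.Walk.length_cons] at hp
        omega
    choose! par hpar1 hpar2 using hpar
    refine ⟨fun w => if G.dist r w = n + 1 then f (par w) w else c w, fun v hv => ?_⟩
    rcases Nat.lt_succ_iff_lt_or_eq.mp hv with hlt | heq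
    · refine (hc v hlt).congr (if_neg (by omega)) fun w hw => if_neg ?_
      have := hT.dist_eq_dist_add_one_of_adj r hw
      omega
    · refine (hf2 v heq).congr ?_ fun w hw => ?_
      · rw [if_neg (by omega), hf1 v heq v (by simp)]
      · split_ifs with h
        · rw [hT.eq_of_adj_of_dist_lt r (hpar1 w h) hw (by rw [hpar2 w h, h]) (by rw [heq, h])]
        · rw [hf1 v heq w (by simp [h])]

lemma isGlobalDefensiveKAlliance_of_goodAt [Fintype V] [DecidableEq V] [Nonempty V]
    (G : SimpleGraph V) [DecidableRel G.Adj] (P : V → Prop) [DecidablePred P] (c : V → Bool)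
    (hc : ∀ v, GoodAt G P c v) (b : Bool) :
    IsGlobalDefensiveKAlliance G (-1) (univ.filter fun v => P v ∨ c v = b) := by
  set S := univ.filter fun v => P v ∨ c v = b with hS
  have hdom : IsDominatingSet G S := by
    intro v hv
    simp only [hS, Finset.mem_filter, Finset.mem_univ, true_and, not_or] at hv
    obtain ⟨w, hw, h⟩ := ((hc v).2 hv.1).2
    refine ⟨w, ?_, ((G.mem_neighborFinset v w).mp hw).symm⟩
    simp only [hS, Finset.mem_filter, Finset.mem_univ, true_and]
    refine h.imp id fun h => ?_
    have hv2 := hv.2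
    revert h hv2
    cases c w <;> cases c v <;> cases b <;> simp
  refine ⟨⟨?_, fun v hv => ?_⟩, hdom⟩
  · obtain ⟨v⟩ := ‹Nonempty V›
    by_cases hv : v ∈ S
    · exact ⟨v, hv⟩
    · obtain ⟨u, hu, -⟩ := hdom v hv
      exact ⟨u, hu⟩
  · have hout : degIn G Sᶜ v = #{w ∈ G.neighborFinset v | ¬ P w ∧ c w = !b} := by
      unfold degIn
      congr 1
      ext w
      simp only [hS, Finset.mem_inter, Finset.mem_compl, Finset.mem_filter, Finset.mem_univ,
        true_and, not_or, Bool.eq_not_iff, ne_eq]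
    have htot : degIn G S v + degIn G Sᶜ v = G.degree v := by
      unfold degIn
      rw [← G.card_neighborFinset_eq_degree, ← Finset.sdiff_eq_inter_compl,
        Finset.card_inter_add_card_sdiff]
    have hle : 2 * degIn G Sᶜ v ≤ G.degree v + 1 := by
      rw [hout]
      by_cases hPv : P v
      · exact (hc v).1 hPv _
      · have hcv : c v = b := by simpa [hS, hPv] using hv
        have := ((hc v).2 hPv).1
        rw [hcv] at this
        simpa only [Bool.eq_not_iff] using this
    omega


/-- Theorem: for a tree `T` of order `n ≥ 3` with `s` support vertices,
`γ_{-1}^d(T) ≤ (n+s)/2`. -/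
theorem tree_globalDefensiveAllianceNum_upper_bound [Fintype V] [DecidableEq V]
    (G : SimpleGraph V) [DecidableRel G.Adj] (hT : G.IsTree) (hn : 3 ≤ Fintype.card V)
    (s : ℕ)
    (hs : s = (univ.filter fun v => ∃ u ∈ G.neighborFinset v, G.degree u = 1).card) :
    (globalDefensiveAllianceNum G (-1) : ℚ) ≤ ((Fintype.card V : ℚ) + (s : ℚ)) / 2 := by
  classical
  obtain ⟨r⟩ := hT.connected.nonempty
  have : Nonempty V := ⟨r⟩
  have : Nontrivial V := Fintype.one_lt_card_iff_nontrivial.mp (by omega)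
  set P : V → Prop := fun v => ∃ u ∈ G.neighborFinset v, G.degree u = 1 with hP
  have hpos : ∀ v, 1 ≤ G.degree v := fun v =>
    hT.connected.preconnected.degree_pos_of_nontrivial v
  have hleaf : ∀ v, (∃ w ∈ G.neighborFinset v, P w) ∨ 2 ≤ G.degree v := by
    intro v
    rcases (hpos v).eq_or_lt with h | h
    · obtain ⟨w, hw⟩ := (G.degree_pos_iff_exists_adj v).mp (hpos v)
      exact Or.inl ⟨w, by simpa using hw, v, by simpa using hw.symm, h.symm⟩
    · exact Or.inr h
  obtain ⟨c, hc⟩ := exists_goodAt_of_dist_lt hT P hpos hleaf r (univ.sup (G.dist r) + 1)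
  have hc' : ∀ v, GoodAt G P c v := fun v =>
    hc v (Nat.lt_succ_of_le (Finset.le_sup (f := G.dist r) (Finset.mem_univ v)))
  have hmin : ∀ b, globalDefensiveAllianceNum G (-1) ≤ #{v | P v ∨ c v = b} := fun b =>
    Nat.sInf_le ⟨_, isGlobalDefensiveKAlliance_of_goodAt G P c hc' b, rfl⟩
  have hsum : #{v | P v ∨ c v = true} + #{v | P v ∨ c v = false} = Fintype.card V + s := by
    rw [← Finset.card_union_add_card_inter, hs, ← Finset.card_univ]
    congr 2
    · ext v
      cases h : c v <;> simp [h]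
    · ext v
      cases h : c v <;> simp [h, hP]
  have h1 := hmin true
  have h2 := hmin false
  -- the smaller of the two sets has at most `(n + s) / 2` elements
  rw [le_div_iff₀ two_pos]
  exact_mod_cast (by omega : globalDefensiveAllianceNum G (-1) * 2 ≤ Fintype.card V + s)
end

section
/- For any positive integers a, b and c with a ≤ c and b ≤ c, there exists a finite connected simple graph G such that a_{-1}(G) = a, γ(G) = b and γ_{-1}^d(G) = c. -/
/-!
A clique `S` in which every vertex has degree at most `2|S| - 1` is a defensive `(-1)`-alliance,
and conversely every member `v` of a defensive `(-1)`-alliance `S` satisfies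
`deg v ≤ 2|S| - 1`. So all the alliance numbers can be controlled by degrees alone
(`realizes_of_cliques`): it is enough to find a graph with

* an `a`-clique with all degrees at most `2a - 1`, while all degrees in the graph are at
  least `2a - 2`;
* a dominating `c`-clique with all degrees at most `2c - 1`, and a vertex `w` such that every
  vertex of the closed neighborhood of `w` has degree at least `2c - 2` (a global alliance meets
  this closed neighborhood, hence has at least `c` vertices);
* domination number `b`.

Three constructions cover all cases.

* `a = b = 1`: a clique on `2c - 1` vertices with a pendant vertex attached.
* `b = 1`, `a ≥ 2`: a universal vertex, a `c`-clique, an `a`-clique and a large clique, the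
  last one arranged in columns through which the other two are joined to it.
* `b ≥ 2`: take the `(c + 1) × c` rook graph, one of whose lines of `c` vertices is the
  dominating clique; shrink one of the columns to `a` further vertices, which keep only `a - 1` row
  neighbors each, and, away from the dominating clique, merge all but `b - 2` of the other columns
  into a single clique. A dominating set that avoids one of the `b` resulting
  classes of columns would have to cover one of its columns row by row, and counting shows that
  this is too expensive.
-/

open Finset

variable {V : Type*}

/-- The domination number `γ(G)`: minimum cardinality of a dominating set. -/
noncomputable def dominationNum [Fintype V] (G : SimpleGraph V) : ℕ :=
  sInf {m : ℕ | ∃ S : Finset V, IsDominatingSet G S ∧ S.card = m}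

/-! ### Alliances and cliques -/

section General

variable {W : Type} [Fintype W] [DecidableEq W] (G : SimpleGraph W) [DecidableRel G.Adj]

lemma le_degree_of_forall_adj {v : W} (N : Finset W) (h : ∀ x ∈ N, G.Adj v x) :
    N.card ≤ G.degree v := by
  rw [← G.card_neighborFinset_eq_degree]
  exact card_le_card fun x hx => by simpa using h x hx

lemma degree_le_of_forall_mem {v : W} (N : Finset W) (h : ∀ x, G.Adj v x → x ∈ N) :
    G.degree v ≤ N.card := by
  rw [← G.card_neighborFinset_eq_degree]
  exact card_le_card fun x hx => h x (by simpa using hx)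

lemma degIn_add_degIn_compl (S : Finset W) (v : W) :
    degIn G S v + degIn G Sᶜ v = G.degree v := by
  unfold degIn
  rw [← G.card_neighborFinset_eq_degree, ← card_union_of_disjoint, ← inter_union_distrib_left]
  · simp
  · exact disjoint_of_subset_left inter_subset_right
      (disjoint_of_subset_right inter_subset_right disjoint_compl_right)

lemma degree_lt_of_isDefensiveKAlliance {S : Finset W} (hS : IsDefensiveKAlliance G (-1) S)
    {v : W} (hv : v ∈ S) : G.degree v + 1 ≤ 2 * S.card := by
  have h1 := hS.2 v hv
  have h2 := degIn_add_degIn_compl G S v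
  have h3 : degIn G S v + 1 ≤ S.card := by
    rw [← card_erase_add_one hv]
    refine Nat.add_le_add_right (card_le_card fun x hx => ?_) 1
    simp only [mem_inter, SimpleGraph.mem_neighborFinset] at hx
    exact mem_erase.2 ⟨hx.1.ne', hx.2⟩
  omega

lemma isDefensiveKAlliance_of_clique {S : Finset W} (hne : S.Nonempty)
    (hcl : ∀ x ∈ S, ∀ y ∈ S, x ≠ y → G.Adj x y)
    (hdeg : ∀ v ∈ S, G.degree v + 1 ≤ 2 * S.card) : IsDefensiveKAlliance G (-1) S := by
  refine ⟨hne, fun v hv => ?_⟩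
  have h2 := degIn_add_degIn_compl G S v
  have h3 : S.card ≤ degIn G S v + 1 := by
    rw [← card_erase_add_one hv]
    refine Nat.add_le_add_right (card_le_card fun x hx => ?_) 1
    rw [mem_erase] at hx
    simpa using ⟨hcl v hv x hx.2 hx.1.symm, hx.2⟩
  have := hdeg v hv
  omega

lemma connected_of_dominating_clique {S : Finset W} (hne : S.Nonempty)
    (hcl : ∀ x ∈ S, ∀ y ∈ S, x ≠ y → G.Adj x y) (hdom : IsDominatingSet G S) :
    G.Connected := by
  obtain ⟨s, hs⟩ := hne
  have hS : ∀ x ∈ S, G.Reachable s x := fun x hx => by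
    by_cases h : s = x
    · rw [h]
    · exact (hcl s hs x hx h).reachable
  have key : ∀ v, G.Reachable s v := fun v => by
    by_cases hv : v ∈ S
    · exact hS v hv
    · obtain ⟨u, hu, huv⟩ := hdom v hv
      exact (hS u hu).trans huv.reachable
  have : Nonempty W := ⟨s⟩
  exact SimpleGraph.Connected.mk fun x y => (key x).symm.trans (key y)

/-- The degree conditions on `T` (an `a`-clique), on `S` (a dominating `c`-clique) and on the
closed neighborhood of `w` determine both alliance numbers. -/
lemma realizes_of_cliques (a b c : ℕ) (ha : 0 < a) (hc : 0 < c) (T S D : Finset W)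
    (hT : T.card = a) (hTcl : ∀ x ∈ T, ∀ y ∈ T, x ≠ y → G.Adj x y)
    (hTdeg : ∀ v ∈ T, G.degree v + 1 ≤ 2 * a)
    (hdeg : ∀ v, 2 * a ≤ G.degree v + 2)
    (hS : S.card = c) (hScl : ∀ x ∈ S, ∀ y ∈ S, x ≠ y → G.Adj x y)
    (hSdeg : ∀ v ∈ S, G.degree v + 1 ≤ 2 * c) (hSdom : IsDominatingSet G S)
    (hD : D.card = b) (hDdom : IsDominatingSet G D)
    (hmin : ∀ D', IsDominatingSet G D' → b ≤ D'.card)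
    (w : W) (hw : ∀ v, v = w ∨ G.Adj v w → 2 * c ≤ G.degree v + 2) :
    G.Connected ∧ defensiveAllianceNum G (-1) = a ∧ dominationNum G = b ∧
        globalDefensiveAllianceNum G (-1) = c := by
  have hSne : S.Nonempty := card_pos.1 (by omega)
  have hTne : T.Nonempty := card_pos.1 (by omega)
  have hTall := isDefensiveKAlliance_of_clique G hTne hTcl (by rwa [hT])
  have hSall := isDefensiveKAlliance_of_clique G hSne hScl (by rwa [hS])
  refine ⟨connected_of_dominating_clique G hSne hScl hSdom, ?_, ?_, ?_⟩
  · refine le_antisymm (Nat.sInf_le ⟨T, hTall, hT⟩) (le_csInf ⟨_, T, hTall, hT⟩ ?_)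
    rintro m ⟨S', hS', rfl⟩
    obtain ⟨v, hv⟩ := hS'.1
    have := degree_lt_of_isDefensiveKAlliance G hS' hv
    have := hdeg v
    omega
  · refine le_antisymm (Nat.sInf_le ⟨D, hDdom, hD⟩) (le_csInf ⟨_, D, hDdom, hD⟩ ?_)
    rintro m ⟨S', hS', rfl⟩
    exact hmin S' hS'
  · refine le_antisymm (Nat.sInf_le ⟨S, ⟨hSall, hSdom⟩, hS⟩)
      (le_csInf ⟨_, S, ⟨hSall, hSdom⟩, hS⟩ ?_)
    rintro m ⟨S', hS', rfl⟩
    obtain ⟨v, hv, hvw⟩ : ∃ v ∈ S', v = w ∨ G.Adj v w := by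
      by_cases h : w ∈ S'
      · exact ⟨w, h, Or.inl rfl⟩
      · obtain ⟨u, hu, huw⟩ := hS'.2 w h
        exact ⟨u, hu, Or.inr huw⟩
    have := degree_lt_of_isDefensiveKAlliance G hS'.1 hv
    have := hw v hvw
    omega

lemma one_le_card_of_isDominatingSet (w : W) (D : Finset W) (h : IsDominatingSet G D) :
    1 ≤ D.card := by
  rw [Nat.one_le_iff_ne_zero, Ne, card_eq_zero]
  rintro rfl
  obtain ⟨u, hu, -⟩ := h w (notMem_empty _)
  exact notMem_empty _ hu

end General

/-! ### A clique with a pendant vertex -/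

/-- The clique on `0, …, 2n` with the pendant vertex `2n + 1` attached to `0`. -/
def pendantClique (n : ℕ) : SimpleGraph (Fin (2 * n + 2)) where
  Adj x y := x ≠ y ∧ ((x.val = 2 * n + 1 → y.val = 0) ∧ (y.val = 2 * n + 1 → x.val = 0))
  symm := ⟨fun _ _ h => ⟨h.1.symm, h.2.2, h.2.1⟩⟩
  loopless := ⟨fun _ h => h.1 rfl⟩

open Classical in
lemma pendantClique_realizes (n : ℕ) :
    (pendantClique n).Connected ∧ defensiveAllianceNum (pendantClique n) (-1) = 1 ∧
      dominationNum (pendantClique n) = 1 ∧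
        globalDefensiveAllianceNum (pendantClique n) (-1) = n + 1 := by
  have hadj : ∀ x y, (pendantClique n).Adj x y ↔ x ≠ y ∧
    ((x.val = 2 * n + 1 → y.val = 0) ∧ (y.val = 2 * n + 1 → x.val = 0)) := fun _ _ => Iff.rfl
  have hzero : ∀ D : Finset (Fin (2 * n + 2)), 0 ∈ D → IsDominatingSet (pendantClique n) D := by
    intro D h0 v hv
    refine ⟨0, h0, ?_⟩
    rw [hadj]
    refine ⟨fun h => hv (h ▸ h0), ?_, ?_⟩ <;> simp
  refine realizes_of_cliques (pendantClique n) 1 1 (n + 1) one_pos (Nat.succ_pos n)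
    {Fin.last _} (univ.filter fun x => x.val < n + 1) {0} (card_singleton _) ?_ ?_ ?_ ?_ ?_ ?_ ?_
    (card_singleton _) (hzero _ (mem_singleton_self _)) ?_ ⟨2 * n, by omega⟩ ?_
  · intro x hx y hy hxy
    exact absurd ((mem_singleton.1 hx).trans (mem_singleton.1 hy).symm) hxy
  · intro v hv
    rw [mem_singleton] at hv
    have := degree_le_of_forall_mem (pendantClique n) (v := v) {0} (by
      intro x hx
      rw [hadj] at hx
      have := hx.2.1 (by simp [hv])
      exact mem_singleton.2 (Fin.ext this))
    simp at this
    omega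
  · intro v; omega
  · rw [Fin.card_filter_val_lt]
    omega
  · intro x hx y hy hxy
    simp only [mem_filter, mem_univ, true_and] at hx hy
    rw [hadj]
    exact ⟨hxy, by omega, by omega⟩
  · intro v _
    have := (pendantClique n).degree_lt_card_verts v
    simp at this
    omega
  · exact hzero _ (by simp)
  · exact one_le_card_of_isDominatingSet _ 0
  · intro v hv
    by_cases hn : n = 0
    · omega
    have hv' : v.val ≠ 2 * n + 1 := by
      rintro h
      rcases hv with rfl | hv
      · simp at h
      · have := ((hadj _ _).1 hv).2.1 h
        simp at this
        omega
    have := le_degree_of_forall_adj (pendantClique n) (v := v) ((univ.erase v).erase (Fin.last _))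
      (by
        intro x hx
        rw [hadj]
        simp only [mem_erase, mem_univ, and_true] at hx
        refine ⟨hx.2.symm, fun h => absurd h hv', fun h => absurd (Fin.ext h) hx.1⟩)
    rw [card_erase_of_mem, card_erase_of_mem (mem_univ _)] at this
    · simp at this
      omega
    · simp only [mem_erase, mem_univ, and_true]
      exact fun h => hv' (by rw [← h]; rfl)

/-! ### A graph with a universal vertex -/

/-- Vertices of the graph with a universal vertex: the universal vertex, the dominating clique of
size `n + 2`, the small clique of size `m + 2`, and the remaining clique, which is arranged in
`n + 2` columns of length `n`. -/
abbrev ConeVertex (m n : ℕ) : Type :=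
  Unit ⊕ (Fin (n + 2) ⊕ (Fin (m + 2) ⊕ (Fin (n + 2) × Fin n)))

/-- Adjacency for the case of domination number `1`. The vertex with index `j` of the dominating
clique is joined to the vertex with the same index of the small clique and to the whole column
`j`; a vertex of the small clique is joined to the first `m` vertices of the column with its
index. -/
def coneAdj (m n : ℕ) : ConeVertex m n → ConeVertex m n → Prop
  | .inl _, .inl _ => False
  | .inl _, .inr _ => True
  | .inr _, .inl _ => True
  | .inr (.inl i), .inr (.inl j) => i ≠ j
  | .inr (.inl i), .inr (.inr (.inl j)) => i.val = j.val
  | .inr (.inr (.inl j)), .inr (.inl i) => i.val = j.val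
  | .inr (.inl i), .inr (.inr (.inr p)) => p.1 = i
  | .inr (.inr (.inr p)), .inr (.inl i) => p.1 = i
  | .inr (.inr (.inl i)), .inr (.inr (.inl j)) => i ≠ j
  | .inr (.inr (.inl j)), .inr (.inr (.inr p)) => p.1.val = j.val ∧ p.2.val < m
  | .inr (.inr (.inr p)), .inr (.inr (.inl j)) => p.1.val = j.val ∧ p.2.val < m
  | .inr (.inr (.inr p)), .inr (.inr (.inr q)) => p ≠ q

/-- The graph with adjacency `coneAdj`; it realizes `(m + 2, 1, n + 2)` for `m ≤ n`. -/
def coneGraph (m n : ℕ) : SimpleGraph (ConeVertex m n) where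
  Adj := coneAdj m n
  symm := ⟨by
    rintro (x | x | x | x) (y | y | y | y) h <;> simp only [coneAdj] at h ⊢ <;>
      first | exact h | exact h.symm⟩
  loopless := ⟨by rintro (x | x | x | x) h <;> simp [coneAdj] at h⟩

section Cone

variable {m n : ℕ}

open Classical in
lemma coneGraph_degree_dominating (i : Fin (n + 2)) :
    2 * n + 2 ≤ (coneGraph m n).degree (.inr (.inl i)) ∧
      (coneGraph m n).degree (.inr (.inl i)) ≤ 2 * n + 3 := by
  constructor
  · refine le_trans ?_ (le_degree_of_forall_adj _
      (disjSum univ (disjSum (univ.erase i) (disjSum ∅ ({i} ×ˢ univ)))) ?_)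
    · simp; omega
    · rintro (x | x | x | x) hx <;> simp [coneGraph, coneAdj, -singleton_product, -product_singleton] at hx ⊢
      · exact Ne.symm hx
      · exact hx
  · refine le_trans (degree_le_of_forall_mem _
      (disjSum univ (disjSum (univ.erase i)
        (disjSum (univ.filter fun j => i.val = j.val) ({i} ×ˢ univ)))) ?_) ?_
    · rintro (x | x | x | x) hx <;> simp [coneGraph, coneAdj, -singleton_product, -product_singleton] at hx ⊢
      · exact Ne.symm hx
      · exact hx
      · exact hx
    · have : (univ.filter fun j : Fin (m + 2) => i.val = j.val).card ≤ 1 :=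
        card_le_one.2 fun x hx y hy => Fin.ext (by simp at hx hy; omega)
      simp; omega

open Classical in
lemma coneGraph_degree_small (hmn : m ≤ n) (j : Fin (m + 2)) :
    2 * m + 2 ≤ (coneGraph m n).degree (.inr (.inr (.inl j))) ∧
      (coneGraph m n).degree (.inr (.inr (.inl j))) ≤ 2 * m + 3 := by
  have hj : j.val < n + 2 := by omega
  have hcard : (univ.filter fun r : Fin n => r.val < m).card = m := by
    rw [Fin.card_filter_val_lt]; omega
  constructor
  · refine le_trans ?_ (le_degree_of_forall_adj _
      (disjSum univ (disjSum ∅ (disjSum (univ.erase j)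
        ({⟨j.val, hj⟩} ×ˢ (univ.filter fun r : Fin n => r.val < m))))) ?_)
    · simp [hcard]; omega
    · rintro (x | x | x | x) hx <;> simp [coneGraph, coneAdj, -singleton_product, -product_singleton] at hx ⊢
      · exact Ne.symm hx
      · simp [hx]
  · refine le_trans (degree_le_of_forall_mem _
      (disjSum univ (disjSum {⟨j.val, hj⟩} (disjSum (univ.erase j)
        ({⟨j.val, hj⟩} ×ˢ (univ.filter fun r : Fin n => r.val < m))))) ?_) ?_
    · rintro (x | x | x | x) hx <;> simp [coneGraph, coneAdj, -singleton_product, -product_singleton] at hx ⊢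
      · exact Fin.ext hx
      · exact Ne.symm hx
      · exact ⟨Fin.ext hx.1, hx.2⟩
    · simp [hcard]; omega

open Classical in
lemma coneGraph_degree_block (p : Fin (n + 2) × Fin n) :
    2 * n + 2 ≤ (coneGraph m n).degree (.inr (.inr (.inr p))) := by
  refine le_trans ?_ (le_degree_of_forall_adj _
      (disjSum univ (disjSum {p.1} (disjSum ∅ (univ.erase p)))) ?_)
  · have : 1 ≤ n := by have := p.2.2; omega
    simp
    zify [show 1 ≤ (n + 2) * n by nlinarith]
    nlinarith
  · rintro (x | x | x | x) hx <;> simp [coneGraph, coneAdj] at hx ⊢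
    · exact hx.symm
    · exact Ne.symm hx

open Classical in
lemma coneGraph_degree_apex (u : Unit) :
    2 * n + 2 ≤ (coneGraph m n).degree (.inl u) := by
  refine le_trans ?_ (le_degree_of_forall_adj _
      (disjSum ∅ (disjSum univ (disjSum ∅ univ))) ?_)
  · simp
    nlinarith
  · rintro (x | x | x | x) hx <;> simp [coneGraph, coneAdj] at hx ⊢

open Classical in
lemma coneGraph_realizes (hmn : m ≤ n) :
    (coneGraph m n).Connected ∧ defensiveAllianceNum (coneGraph m n) (-1) = m + 2 ∧
      dominationNum (coneGraph m n) = 1 ∧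
        globalDefensiveAllianceNum (coneGraph m n) (-1) = n + 2 := by
  refine realizes_of_cliques (coneGraph m n) (m + 2) 1 (n + 2) (by omega) (by omega)
    (disjSum ∅ (disjSum ∅ (disjSum univ ∅))) (disjSum ∅ (disjSum univ ∅)) (disjSum univ ∅)
    (by simp) ?_ ?_ ?_ (by simp) ?_ ?_ ?_ (by simp) ?_
    (one_le_card_of_isDominatingSet _ (.inl ())) (.inr (.inl (Fin.last _))) ?_
  · rintro (x | x | x | x) hx (y | y | y | y) hy hxy <;>
      simp [coneGraph, coneAdj] at hx hy hxy ⊢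
    exact hxy
  · rintro (x | x | x | x) hx <;> simp only [inl_mem_disjSum, inr_mem_disjSum, notMem_empty] at hx
    have := (coneGraph_degree_small hmn x).2
    omega
  · rintro (x | x | x | x)
    · have := coneGraph_degree_apex (m := m) (n := n) x; omega
    · have := (coneGraph_degree_dominating (m := m) x).1; omega
    · have := (coneGraph_degree_small hmn x).1; omega
    · have := coneGraph_degree_block (m := m) x; omega
  · rintro (x | x | x | x) hx (y | y | y | y) hy hxy <;>
      simp [coneGraph, coneAdj] at hx hy hxy ⊢
    exact hxy
  · rintro (x | x | x | x) hx <;> simp only [inl_mem_disjSum, inr_mem_disjSum, notMem_empty] at hx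
    have := (coneGraph_degree_dominating (m := m) x).2
    omega
  · rintro (x | x | x | x) hx
    · exact ⟨.inr (.inl 0), by simp, by simp [coneGraph, coneAdj]⟩
    · simp at hx
    · exact ⟨.inr (.inl ⟨x.val, by omega⟩), by simp, by simp [coneGraph, coneAdj]⟩
    · exact ⟨.inr (.inl x.1), by simp, by simp [coneGraph, coneAdj]⟩
  · rintro (x | x) hx
    · simp at hx
    · exact ⟨.inl (), by simp, by simp [coneGraph, coneAdj]⟩
  · rintro (x | x | x | x) hx
    · have := coneGraph_degree_apex (m := m) (n := n) x; omega
    · have := (coneGraph_degree_dominating (m := m) x).1; omega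
    · -- The small clique reaches the last dominating vertex only if it has full size.
      have := (coneGraph_degree_small hmn x).1
      simp [coneGraph, coneAdj] at hx
      omega
    · have := coneGraph_degree_block (m := m) x; omega

end Cone

/-! ### The modified rook graph -/

/-- Vertices of the modified rook graph: the dominating clique of size `n + 2`, `n + 1` columns
of length `n + 2`, and one shorter column of length `a`. -/
abbrev RookVertex (a n : ℕ) : Type :=
  Fin (n + 2) ⊕ ((Fin (n + 1) × Fin (n + 2)) ⊕ Fin a)

/-- Adjacency for domination number `k + 2`. A long column is joined to the dominating vertex with
its index, the short column to the last dominating vertex. Columns are cliques, and so are the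
rows of the long columns; the long columns with index at least `k` form a single clique. A vertex
of the short column is joined to the vertices of its row in the first `a - 1` long columns. -/
def rookAdj (a k n : ℕ) : RookVertex a n → RookVertex a n → Prop
  | .inl i, .inl j => i ≠ j
  | .inl i, .inr (.inl p) => i.val = p.1.val
  | .inr (.inl p), .inl i => i.val = p.1.val
  | .inl i, .inr (.inr _) => i.val = n + 1
  | .inr (.inr _), .inl i => i.val = n + 1
  | .inr (.inl p), .inr (.inl q) =>
      p ≠ q ∧ (p.1 = q.1 ∨ p.2 = q.2 ∨ (k ≤ p.1.val ∧ k ≤ q.1.val))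
  | .inr (.inl p), .inr (.inr t) => p.2.val = t.val ∧ p.1.val + 1 < a
  | .inr (.inr t), .inr (.inl p) => p.2.val = t.val ∧ p.1.val + 1 < a
  | .inr (.inr s), .inr (.inr t) => s ≠ t

/-- The modified rook graph; it realizes `(a, k + 2, n + 2)` for `1 ≤ a ≤ n + 2` and `k ≤ n`. -/
def rookGraph (a k n : ℕ) : SimpleGraph (RookVertex a n) where
  Adj := rookAdj a k n
  symm := ⟨by
    rintro (x | x | x) (y | y | y) h <;> simp only [rookAdj] at h ⊢ <;>
      first
      | exact h
      | exact h.symm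
      | exact ⟨h.1.symm, h.2.imp Eq.symm (Or.imp Eq.symm And.symm)⟩⟩
  loopless := ⟨by rintro (x | x | x) h <;> simp [rookAdj] at h⟩

/-- The class of a vertex of the modified rook graph: the index of its column, where the columns
merged into one clique share the class `k` and the short column has class `k + 1`. -/
def rookClass (a k n : ℕ) : RookVertex a n → ℕ
  | .inl i => if i.val = n + 1 then k + 1 else min i.val k
  | .inr (.inl p) => min p.1.val k
  | .inr (.inr _) => k + 1

/-- The row of a vertex in a column; the value `0` on the dominating clique carries no meaning. -/
def rookRow (a n : ℕ) : RookVertex a n → ℕ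
  | .inl _ => 0
  | .inr (.inl p) => p.2.val
  | .inr (.inr t) => t.val

section Rook

variable {a k n : ℕ}

open Classical in
lemma rookGraph_degree_dominating (ha : a ≤ n + 2) (i : Fin (n + 2)) :
    n + 1 + a ≤ (rookGraph a k n).degree (.inl i) ∧
      (i.val ≠ n + 1 → 2 * n + 2 ≤ (rookGraph a k n).degree (.inl i)) ∧
      (rookGraph a k n).degree (.inl i) ≤ 2 * n + 3 := by
  by_cases hi : i.val = n + 1
  · refine ⟨?_, fun h => absurd hi h, ?_⟩
    · refine le_trans ?_ (le_degree_of_forall_adj _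
        (disjSum (univ.erase i) (disjSum ∅ univ)) ?_)
      · simp
      · rintro (x | x | x) hx <;> simp [rookGraph, rookAdj, -singleton_product, -product_singleton] at hx ⊢
        · exact Ne.symm hx
        · exact hi
    · refine le_trans (degree_le_of_forall_mem _
        (disjSum (univ.erase i) (disjSum ∅ univ)) ?_) ?_
      · rintro (x | x | x) hx <;> simp [rookGraph, rookAdj, -singleton_product, -product_singleton] at hx ⊢
        · exact Ne.symm hx
        · omega
      · simp; omega
  · have hi' : i.val < n + 1 := by omega
    have hlow : 2 * n + 3 ≤ (rookGraph a k n).degree (.inl i) := by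
      refine le_trans ?_ (le_degree_of_forall_adj _
        (disjSum (univ.erase i) (disjSum ({⟨i.val, hi'⟩} ×ˢ univ) ∅)) ?_)
      · simp; omega
      · rintro (x | x | x) hx <;> simp [rookGraph, rookAdj, -singleton_product, -product_singleton] at hx ⊢
        · exact Ne.symm hx
        · simp [hx]
    refine ⟨by omega, fun _ => by omega, ?_⟩
    refine le_trans (degree_le_of_forall_mem _
        (disjSum (univ.erase i) (disjSum ({⟨i.val, hi'⟩} ×ˢ univ) ∅)) ?_) ?_
    · rintro (x | x | x) hx <;> simp [rookGraph, rookAdj, -singleton_product, -product_singleton] at hx ⊢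
      · exact Ne.symm hx
      · exact Fin.ext hx.symm
      · omega
    · simp; omega

open Classical in
lemma rookGraph_degree_long (p : Fin (n + 1) × Fin (n + 2)) :
    2 * n + 2 ≤ (rookGraph a k n).degree (.inr (.inl p)) := by
  have hdisj : Disjoint ({p.1} ×ˢ univ.erase p.2) (univ.erase p.1 ×ˢ {p.2}) := by
    rw [disjoint_left]
    rintro ⟨x, y⟩ h1 h2
    simp [-singleton_product, -product_singleton] at h1 h2
    exact h2.1 h1.1
  refine le_trans ?_ (le_degree_of_forall_adj _
    (disjSum {⟨p.1.val, by omega⟩}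
      (disjSum ({p.1} ×ˢ univ.erase p.2 ∪ univ.erase p.1 ×ˢ {p.2}) ∅)) ?_)
  · simp [card_union_of_disjoint hdisj, -singleton_product, -product_singleton]; omega
  · rintro (x | x | x) hx <;> simp [rookGraph, rookAdj, -singleton_product, -product_singleton] at hx ⊢
    · simp [hx]
    · grind

open Classical in
lemma rookGraph_degree_short (ha : a ≤ n + 2) (t : Fin a) :
    (rookGraph a k n).degree (.inr (.inr t)) + 1 = 2 * a := by
  have ht := t.2
  have hcard : (univ.filter fun r : Fin (n + 1) => r.val < a - 1).card = a - 1 := by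
    rw [Fin.card_filter_val_lt]; omega
  have key : ∀ x, (rookGraph a k n).Adj (.inr (.inr t)) x ↔
      x ∈ disjSum {Fin.last _} (disjSum
        ((univ.filter fun r : Fin (n + 1) => r.val < a - 1) ×ˢ {⟨t.val, by omega⟩})
        (univ.erase t)) := by
    rintro (x | x | x) <;> simp [rookGraph, rookAdj, Fin.ext_iff, -singleton_product, -product_singleton]
    · omega
    · exact ne_comm
  have h1 := degree_le_of_forall_mem _ _ fun x => (key x).1
  have h2 := le_degree_of_forall_adj _ _ fun x => (key x).2
  simp [hcard] at h1 h2
  omega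

/-- A dominating set with fewer than `k + 2` vertices meets every class of long columns: if it
missed class `j ≤ k`, each vertex of column `j` would be dominated by a vertex of its own row, so
that all `n + 2` rows would be represented. -/
lemma rook_hits_long_class (hk : k ≤ n) {D : Finset (RookVertex a n)}
    (hD : IsDominatingSet (rookGraph a k n) D) (hcard : D.card < k + 2) {j : ℕ} (hj : j ≤ k) :
    j ∈ D.image (rookClass a k n) := by
  by_contra hmiss
  have hcl : ∀ v ∈ D, rookClass a k n v ≠ j := fun v hv h => hmiss (mem_image.2 ⟨v, hv, h⟩)
  have hsub : range (n + 2) ⊆ D.image (rookRow a n) := by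
    intro r hr
    rw [mem_range] at hr
    set q : Fin (n + 1) × Fin (n + 2) := (⟨j, by omega⟩, ⟨r, hr⟩) with hq
    have hqD : (.inr (.inl q) : RookVertex a n) ∉ D := fun h => hcl _ h (by
      simp [rookClass, hq, hj])
    obtain ⟨u, hu, huq⟩ := hD _ hqD
    refine mem_image.2 ⟨u, hu, ?_⟩
    have hclu := hcl u hu
    rcases u with x | x | x <;>
      simp only [rookGraph, rookAdj, rookClass, rookRow, hq, Fin.ext_iff] at huq hclu ⊢
    · rw [if_neg (by omega)] at hclu
      omega
    · omega
    · omega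
  have := (card_le_card hsub).trans card_image_le
  rw [card_range] at this
  omega

open Classical in
/-- If the class of the short column is missed, its `a` vertices are dominated by `a` vertices
in the first `a - 1` long columns, while all classes of index between `a - 1` and `k` contain
further vertices of the dominating set. -/
lemma rook_le_card_of_isDominatingSet (ha : 0 < a) (hk : k ≤ n)
    (D : Finset (RookVertex a n)) (hD : IsDominatingSet (rookGraph a k n) D) :
    k + 2 ≤ D.card := by
  by_contra! hcard
  have hhit := fun j hj => rook_hits_long_class hk hD hcard (j := j) hj
  by_cases hlast : k + 1 ∈ D.image (rookClass a k n)
  · have hsub : range (k + 2) ⊆ D.image (rookClass a k n) := by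
      intro j hj
      rw [mem_range] at hj
      rcases Nat.lt_or_ge j (k + 1) with h | h
      · exact hhit j (by omega)
      · obtain rfl : j = k + 1 := by omega
        exact hlast
    have := (card_le_card hsub).trans card_image_le
    rw [card_range] at this
    omega
  · have hcl : ∀ v ∈ D, rookClass a k n v ≠ k + 1 :=
      fun v hv h => hlast (mem_image.2 ⟨v, hv, h⟩)
    let P : RookVertex a n → Prop := fun v => ∃ p : Fin (n + 1) × Fin (n + 2),
      v = .inr (.inl p) ∧ p.1.val + 1 < a
    have h1 : range a ⊆ (D.filter P).image (rookRow a n) := by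
      intro r hr
      rw [mem_range] at hr
      have hqD : (.inr (.inr ⟨r, hr⟩) : RookVertex a n) ∉ D := fun h => hcl _ h rfl
      obtain ⟨u, hu, huq⟩ := hD _ hqD
      have hclu := hcl u hu
      rcases u with x | x | x
      · simp only [rookGraph, rookAdj, rookClass] at huq hclu
        simp [huq] at hclu
      · simp only [rookGraph, rookAdj] at huq
        exact mem_image.2 ⟨_, mem_filter.2 ⟨hu, x, rfl, huq.2⟩, huq.1⟩
      · exact absurd rfl hclu
    have h2 : Ico (a - 1) (k + 1) ⊆ (D.filter fun v => ¬ P v).image (rookClass a k n) := by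
      intro j hj
      rw [mem_Ico] at hj
      obtain ⟨v, hv, rfl⟩ := mem_image.1 (hhit j (by omega))
      refine mem_image.2 ⟨v, mem_filter.2 ⟨hv, ?_⟩, rfl⟩
      rintro ⟨p, rfl, hp⟩
      simp only [rookClass] at hj
      omega
    have h1' := (card_le_card h1).trans card_image_le
    have h2' := (card_le_card h2).trans card_image_le
    rw [card_range] at h1'
    rw [Nat.card_Ico] at h2'
    have := card_filter_add_card_filter_not (s := D) P
    omega

open Classical in
lemma rookGraph_realizes (ha : 0 < a) (han : a ≤ n + 2) (hk : k ≤ n) :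
    (rookGraph a k n).Connected ∧ defensiveAllianceNum (rookGraph a k n) (-1) = a ∧
      dominationNum (rookGraph a k n) = k + 2 ∧
        globalDefensiveAllianceNum (rookGraph a k n) (-1) = n + 2 := by
  have hcardD : (univ.filter fun i : Fin (n + 2) => i.val < k).card = k := by
    rw [Fin.card_filter_val_lt]; omega
  refine realizes_of_cliques (rookGraph a k n) a (k + 2) (n + 2) ha (by omega)
    (disjSum ∅ (disjSum ∅ univ)) (disjSum univ ∅)
    (disjSum (insert (Fin.last _) (univ.filter fun i : Fin (n + 2) => i.val < k))
      (disjSum {(⟨k, by omega⟩, 0)} ∅))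
    (by simp) ?_ ?_ ?_ (by simp) ?_ ?_ ?_ ?_ ?_
    (rook_le_card_of_isDominatingSet ha hk) (.inr (.inl (0, Fin.last _))) ?_
  · rintro (x | x | x) hx (y | y | y) hy hxy <;>
      simp [rookGraph, rookAdj] at hx hy hxy ⊢
    exact hxy
  · rintro (x | x | x) hx <;> simp only [inl_mem_disjSum, inr_mem_disjSum, notMem_empty] at hx
    exact (rookGraph_degree_short han x).le
  · rintro (x | x | x)
    · have := (rookGraph_degree_dominating (k := k) han x).1; omega
    · have := rookGraph_degree_long (a := a) (k := k) x; omega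
    · have := rookGraph_degree_short (k := k) han x; omega
  · rintro (x | x | x) hx (y | y | y) hy hxy <;>
      simp [rookGraph, rookAdj] at hx hy hxy ⊢
    exact hxy
  · rintro (x | x | x) hx <;> simp only [inl_mem_disjSum, inr_mem_disjSum, notMem_empty] at hx
    have := (rookGraph_degree_dominating (k := k) han x).2.2
    omega
  · rintro (x | x | x) hx
    · simp at hx
    · exact ⟨.inl ⟨x.1.val, by omega⟩, by simp, by simp [rookGraph, rookAdj]⟩
    · exact ⟨.inl (Fin.last _), by simp, by simp [rookGraph, rookAdj]⟩
  · rw [card_disjSum, card_insert_of_notMem (by simp; omega), hcardD]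
    simp
  · rintro (x | x | x) hx
    · refine ⟨.inl (Fin.last _), by simp, ?_⟩
      simp [rookGraph, rookAdj] at hx ⊢
      exact fun h => hx.1 h.symm
    · by_cases hxk : x.1.val < k
      · refine ⟨.inl ⟨x.1.val, by omega⟩, by simp [hxk], ?_⟩
        simp [rookGraph, rookAdj]
      · refine ⟨.inr (.inl (⟨k, by omega⟩, 0)), by simp, ?_⟩
        simp [rookGraph, rookAdj] at hx ⊢
        exact ⟨fun h => hx h.symm, Or.inr (Or.inr (by omega))⟩
    · exact ⟨.inl (Fin.last _), by simp, by simp [rookGraph, rookAdj]⟩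
  · rintro (x | x | x) hx
    · refine (Nat.add_le_add_right
        ((rookGraph_degree_dominating (k := k) han x).2.1 ?_) 2).trans' (by omega)
      simp [rookGraph, rookAdj] at hx
      simp [hx]
    · have := rookGraph_degree_long (a := a) (k := k) x; omega
    · -- The last row of the long columns meets the short column only if the latter has full length.
      have := rookGraph_degree_short (k := k) han x
      simp [rookGraph, rookAdj] at hx
      omega

end Rook

/-- Theorem (realizability): for any positive integers `a`, `b`, `c` with `a ≤ c` and `b ≤ c`,
there exists a finite connected graph `G` with `a_{-1}(G) = a`, `γ(G) = b` and
`γ_{-1}^d(G) = c`. -/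
theorem exists_graph_with_given_alliance_domination_numbers (a b c : ℕ)
    (ha : 0 < a) (hb : 0 < b) (hc : 0 < c) (hac : a ≤ c) (hbc : b ≤ c) :
    ∃ (W : Type) (_ : Fintype W) (_ : DecidableEq W) (G : SimpleGraph W)
      (_ : DecidableRel G.Adj),
      G.Connected ∧ defensiveAllianceNum G (-1) = a ∧ dominationNum G = b ∧
        globalDefensiveAllianceNum G (-1) = c := by
  classical
  rcases Nat.lt_or_ge b 2 with hb2 | hb2
  · obtain rfl : b = 1 := by omega
    rcases Nat.lt_or_ge a 2 with ha2 | ha2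
    · obtain rfl : a = 1 := by omega
      obtain ⟨n, rfl⟩ := Nat.exists_eq_add_of_le' hc
      exact ⟨_, inferInstance, inferInstance, pendantClique n, Classical.decRel _,
        by convert pendantClique_realizes n⟩
    · obtain ⟨m, rfl⟩ := Nat.exists_eq_add_of_le' ha2
      obtain ⟨n, rfl⟩ := Nat.exists_eq_add_of_le' (ha2.trans hac)
      exact ⟨_, inferInstance, inferInstance, coneGraph m n, Classical.decRel _,
        by convert coneGraph_realizes (m := m) (n := n) (by omega)⟩
  · obtain ⟨k, rfl⟩ := Nat.exists_eq_add_of_le' hb2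
    obtain ⟨n, rfl⟩ := Nat.exists_eq_add_of_le' (hb2.trans hbc)
    exact ⟨_, inferInstance, inferInstance, rookGraph a k n, Classical.decRel _,
      by convert rookGraph_realizes (a := a) (k := k) (n := n) ha hac (by omega)⟩
end
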